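/- arXiv:dg-ga/9608005 — 2 statements merged into one kernel-verified Lean document; each statement's English description precedes it below -/
import Mathlib

section
/- Let k ≥ 1. Let B₁ = B(c₁, r₁) ⊆ ℂ be an open disk and, for i = 2, …, k, let B_i = B(c_i, r_i) be open disks whose closures are pairwise disjoint and contained in B₁, and set G = B₁ ∖ (B̄₂ ∪ … ∪ B̄_k) (a circular region). Then every h ∈ 𝒪_(c)(Ḡ) admits a unique decomposition h = h₁ + h₂ + ⋯ + h_k on Ḡ, where: h₁ is continuous on B̄₁ and holomorphic on B₁; and for each i = 2, …, k, h_i is continuous on ℂ ∖ B_i, holomorphic on ℂ ∖ B̄_i, and h_i(z) → 0 as |z| → ∞. Moreover, h₁ is given on B₁ by the Cauchy integral h₁(z) = (1/2πi) ∮_{∂B₁} h(w)/(w−z) dw (counterclockwise). -/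
open Metric Filter Topology

/-!
By the Cauchy formula on an annulus, a function holomorphic around a closed disk `B̄` equals there
the Cauchy integral over an outer circle, which extends holomorphically across `B̄`, minus the
Cauchy integral over the inner one, which is holomorphic off `B̄` and vanishes at infinity.
The second term splits off a principal part at `B̄`; subtracting the principal parts of all the
holes leaves a function that is holomorphic on the whole disk `B₁`.

Uniqueness is Liouville's theorem: if `f + g = f' + g'` with `f, f'` holomorphic on `U ⊇ K` and
`g, g'` holomorphic off `K` and vanishing at infinity, then `f - f'` and `g' - g` glue to an entire
function tending to `0`. Applied to an annulus inside `∂B₁`, the same uniqueness identifies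
`h₁` with the Cauchy integral of `h` over `∂B₁`.
-/

section Topology

variable {X ι : Type*} {U : Set X} {K : ι → Set X}

lemma diff_iUnion_ne_diff (i : ι) :
    (U \ ⋃ j ≠ i, K j) \ K i = U \ ⋃ j, K j := by
  ext z
  simp only [Set.mem_sdiff, Set.mem_iUnion, not_exists]
  grind

lemma subset_diff_iUnion_ne (hKU : ∀ i, K i ⊆ U) (hK : Pairwise fun i j => Disjoint (K i) (K j))
    (i : ι) : K i ⊆ U \ ⋃ j ≠ i, K j :=
  Set.subset_sdiff.2 ⟨hKU i, Set.disjoint_iUnion₂_right.2 fun _ hj => hK hj.symm⟩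

lemma isOpen_diff_iUnion_ne [TopologicalSpace X] [Finite ι] (hU : IsOpen U)
    (hK : ∀ i, IsClosed (K i)) (i : ι) : IsOpen (U \ ⋃ j ≠ i, K j) :=
  hU.sdiff (isClosed_iUnion_of_finite fun j => isClosed_iUnion_of_finite fun _ => hK j)

end Topology

lemma exists_pos_forall_mem_ball_le_dist {X : Type*} [PseudoMetricSpace X] {s : Set X}
    (hs : IsClosed s) {z : X} (hz : z ∉ s) : ∃ ε > 0, ∀ x ∈ ball z ε, ∀ w ∈ s, ε ≤ dist w x := by
  obtain ⟨ε, hε, hball⟩ := Metric.isOpen_iff.1 hs.isOpen_compl z hz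
  refine ⟨ε / 2, half_pos hε, fun x hx w hw => ?_⟩
  by_contra! hlt
  refine hball ((dist_triangle w x z).trans_lt ?_ : w ∈ ball z ε) hw
  linarith [mem_ball.1 hx]

section NormedSpace

variable {F : Type*} [NormedAddCommGroup F] [NormedSpace ℝ F]

lemma closure_compl_closedBall (c : F) {r : ℝ} (hr : r ≠ 0) :
    closure (closedBall c r)ᶜ = (ball c r)ᶜ := by
  rw [closure_compl, interior_closedBall c hr]

lemma closedBall_diff_ball_subset_closure (c : F) {r R : ℝ} (hr : 0 < r) (hrR : r < R) :
    closedBall c R \ ball c r ⊆ closure (ball c R \ closedBall c r) := by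
  rintro z ⟨hzR, hzr⟩
  by_cases hz : z ∈ ball c R
  · rw [← Set.mem_compl_iff, ← closure_compl_closedBall c hr.ne'] at hzr
    exact isOpen_ball.inter_closure ⟨hz, hzr⟩
  · rw [← closure_ball c (hr.trans hrR).ne'] at hzR
    rw [Set.sdiff_eq, Set.inter_comm]
    exact isClosed_closedBall.isOpen_compl.inter_closure
      ⟨fun h => hz (closedBall_subset_ball hrR h), hzR⟩

lemma exists_gt_closedBall_subset [ProperSpace F] {U : Set F} (hU : IsOpen U) {c : F} {r : ℝ}
    (hr : 0 ≤ r) (hsub : closedBall c r ⊆ U) : ∃ R > r, closedBall c R ⊆ U := by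
  obtain ⟨δ, hδ, hδU⟩ := (isCompact_closedBall c r).exists_cthickening_subset_open hU hsub
  rw [cthickening_closedBall hδ.le hr] at hδU
  exact ⟨δ + r, lt_add_of_pos_left r hδ, hδU⟩

end NormedSpace

section DiffContOnCl

variable {𝕜 E F : Type*} [NontriviallyNormedField 𝕜] [NormedAddCommGroup E] [NormedSpace 𝕜 E]
  [NormedAddCommGroup F] [NormedSpace 𝕜 F]

lemma diffContOnCl_sum {ι : Type*} {s : Finset ι} {f : ι → E → F} {U : Set E}
    (hf : ∀ i ∈ s, DiffContOnCl 𝕜 (f i) U) : DiffContOnCl 𝕜 (∑ i ∈ s, f i) U := by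
  refine ⟨DifferentiableOn.sum fun i hi => (hf i hi).differentiableOn, ?_⟩
  rw [Finset.sum_fn]
  exact continuousOn_finsetSum s fun i hi => (hf i hi).continuousOn

lemma differentiableOn_sum_compl_iUnion {ι : Type*} [Fintype ι] {f : ι → E → F} {K : ι → Set E}
    (hf : ∀ i, DifferentiableOn 𝕜 (f i) (K i)ᶜ) :
    DifferentiableOn 𝕜 (∑ i, f i) (⋃ i, K i)ᶜ :=
  DifferentiableOn.sum fun i _ => (hf i).mono (Set.compl_subset_compl.2 (Set.subset_iUnion K i))

lemma differentiableOn_sum_erase {ι : Type*} [Fintype ι] [DecidableEq ι] {f : ι → E → F}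
    {U : Set E} {K : ι → Set E} (hf : ∀ i, DifferentiableOn 𝕜 (f i) (K i)ᶜ) (i : ι) :
    DifferentiableOn 𝕜 (∑ j ∈ Finset.univ.erase i, f j) (U \ ⋃ j ≠ i, K j) :=
  DifferentiableOn.sum fun j hj => (hf j).mono fun _ hz hzj =>
    hz.2 (Set.mem_biUnion (Finset.ne_of_mem_erase hj) hzj)

lemma diffContOnCl_of_frontier_subset {f : E → F} {U V : Set E} (hU : IsOpen U) (hV : IsOpen V)
    (hUV : frontier U ⊆ V) (hf : DifferentiableOn 𝕜 f U) (hfV : ContinuousOn f (closure U ∩ V)) :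
    DiffContOnCl 𝕜 f U := by
  refine ⟨hf, fun z hz => ?_⟩
  by_cases hzU : z ∈ U
  · exact (hf.differentiableAt (hU.mem_nhds hzU)).continuousAt.continuousWithinAt
  · have hzV : z ∈ V := hUV (hU.frontier_eq ▸ ⟨hz, hzU⟩)
    exact (continuousWithinAt_inter (hV.mem_nhds hzV)).1 (hfV z ⟨hz, hzV⟩)

lemma eqOn_closure_of_diffContOnCl {f g : E → F} {U : Set E} (hf : DiffContOnCl 𝕜 f U)
    (hg : DiffContOnCl 𝕜 g U) (hfg : Set.EqOn f g U) : Set.EqOn f g (closure U) :=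
  hfg.of_subset_closure hf.continuousOn hg.continuousOn subset_closure subset_rfl

variable [NormedSpace ℝ E]

lemma diffContOnCl_ball_iff {f : E → F} {c : E} {r : ℝ} (hr : r ≠ 0) :
    DiffContOnCl 𝕜 f (ball c r) ↔
      ContinuousOn f (closedBall c r) ∧ DifferentiableOn 𝕜 f (ball c r) := by
  rw [← closure_ball c hr]
  exact ⟨fun h => ⟨h.2, h.1⟩, fun h => ⟨h.2, h.1⟩⟩

lemma diffContOnCl_compl_closedBall_iff {f : E → F} {c : E} {r : ℝ} (hr : r ≠ 0) :
    DiffContOnCl 𝕜 f (closedBall c r)ᶜ ↔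
      ContinuousOn f (ball c r)ᶜ ∧ DifferentiableOn 𝕜 f (closedBall c r)ᶜ := by
  rw [← closure_compl_closedBall c hr]
  exact ⟨fun h => ⟨h.2, h.1⟩, fun h => ⟨h.2, h.1⟩⟩

end DiffContOnCl

lemma tendsto_sum_zero {X E ι : Type*} [AddCommMonoid E] [TopologicalSpace E] [ContinuousAdd E]
    {l : Filter X} {s : Finset ι} {f : ι → X → E} (hf : ∀ i ∈ s, Tendsto (f i) l (𝓝 0)) :
    Tendsto (∑ i ∈ s, f i) l (𝓝 0) := by
  simpa only [Finset.sum_fn, Finset.sum_const_zero] using tendsto_finsetSum s hf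

variable {E : Type*} [NormedAddCommGroup E] [NormedSpace ℂ E]

section CauchyTransform

variable {f : ℂ → E} {c z : ℂ} {r R : ℝ}

/-- The Cauchy transform `z ↦ (2πi)⁻¹ ∮ f(w) / (w - z) dw` of `f` over the circle `C(c, R)`, used
for `z` on both sides of the circle; on the circle itself its value is junk. -/
noncomputable def cauchyTransform (f : ℂ → E) (c : ℂ) (R : ℝ) (z : ℂ) : E :=
  (2 * (Real.pi : ℂ) * Complex.I)⁻¹ • ∮ w in C(c, R), (w - z)⁻¹ • f w

lemma continuousOn_inv_sub {s : Set ℂ} (hz : z ∉ s) : ContinuousOn (fun w => (w - z)⁻¹) s :=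
  (continuousOn_id.sub continuousOn_const).inv₀ fun w hw h =>
    hz ((sub_eq_zero.1 h : w = z) ▸ hw)

lemma circleIntegrable_inv_sub_smul (hf : CircleIntegrable f c R) (hz : z ∉ sphere c |R|) :
    CircleIntegrable (fun w => (w - z)⁻¹ • f w) c R :=
  hf.fun_continuousOn_smul (continuousOn_inv_sub hz)

lemma differentiableAt_cauchyTransform (hf : CircleIntegrable f c R) (hz : z ∉ sphere c |R|) :
    DifferentiableAt ℂ (cauchyTransform f c R) z := by
  obtain ⟨ε, hε, hfar⟩ := exists_pos_forall_mem_ball_le_dist isClosed_sphere hz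
  have hdist (θ : ℝ) {x : ℂ} (hx : x ∈ ball z ε) : ε ≤ ‖circleMap c R θ - x‖ :=
    (hfar x hx _ (circleMap_mem_sphere' c R θ)).trans_eq (dist_eq_norm _ _)
  have hint {x : ℂ} (hx : x ∈ ball z ε) := (circleIntegrable_inv_sub_smul hf fun hmem =>
    hε.not_ge ((hfar x hx x hmem).trans_eq (dist_self x))).out
  refine DifferentiableAt.const_smul (HasDerivAt.differentiableAt
    (intervalIntegral.hasDerivAt_integral_of_dominated_loc_of_deriv_le (ball_mem_nhds z hε)
      (F' := fun x θ => deriv (circleMap c R) θ •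
        (circleMap c R θ - x)⁻¹ • (circleMap c R θ - x)⁻¹ • f (circleMap c R θ))
      (bound := fun θ => ε⁻¹ * (ε⁻¹ * ‖deriv (circleMap c R) θ • f (circleMap c R θ)‖))
      ?_ (hint (mem_ball_self hε)) ?_ ?_ ?_ ?_).2) _
  · filter_upwards [ball_mem_nhds z hε] with x hx
    exact (hint hx).aestronglyMeasurable_restrict_uIoc
  · exact (circleIntegrable_inv_sub_smul (circleIntegrable_inv_sub_smul hf hz)
      hz).out.aestronglyMeasurable_restrict_uIoc
  · refine .of_forall fun θ _ x hx => ?_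
    have hinv : ‖(circleMap c R θ - x)⁻¹‖ ≤ ε⁻¹ := by
      rw [norm_inv]
      exact inv_anti₀ hε (hdist θ hx)
    rw [smul_comm, smul_comm (deriv (circleMap c R) θ), norm_smul, norm_smul]
    gcongr
  · exact (hf.out.norm.const_mul _).const_mul _
  · refine .of_forall fun θ _ x hx => ?_
    have hne : circleMap c R θ - x ≠ 0 := norm_pos_iff.1 (hε.trans_le (hdist θ hx))
    refine (((((hasDerivAt_id x).const_sub _).inv hne).smul_const _).const_smul _).congr_deriv ?_
    rw [smul_smul (circleMap c R θ - x)⁻¹, id, neg_neg, one_div, sq, mul_inv]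

lemma tendsto_cauchyTransform_cocompact (hf : CircleIntegrable f c R) :
    Tendsto (cauchyTransform f c R) (cocompact ℂ) (𝓝 0) := by
  have hfar : ∀ᶠ z in cocompact ℂ, |R| + 1 ≤ dist z c :=
    (tendsto_dist_right_cocompact_atTop c).eventually_ge_atTop _
  rw [← cobounded_eq_cocompact, ← comap_norm_atTop] at hfar ⊢
  have hlim := intervalIntegral.tendsto_integral_filter_of_dominated_convergence
    (μ := MeasureTheory.volume) (a := 0) (b := 2 * Real.pi)
    (F := fun z θ => deriv (circleMap c R) θ • (circleMap c R θ - z)⁻¹ • f (circleMap c R θ))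
    (f := fun _ => 0) (l := comap norm atTop)
    (fun θ => ‖deriv (circleMap c R) θ • f (circleMap c R θ)‖) ?_ ?_ hf.out.norm ?_
  · rw [intervalIntegral.integral_zero] at hlim
    simpa only [smul_zero] using! hlim.const_smul (2 * (Real.pi : ℂ) * Complex.I)⁻¹
  · filter_upwards [hfar] with z hz
    refine (circleIntegrable_inv_sub_smul hf fun h => ?_).out.aestronglyMeasurable_restrict_uIoc
    linarith [mem_sphere.1 h]
  · filter_upwards [hfar] with z hz
    refine .of_forall fun θ _ => ?_
    have hdist : 1 ≤ ‖circleMap c R θ - z‖ := by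
      have := dist_triangle_left z c (circleMap c R θ)
      rw [mem_sphere.1 (circleMap_mem_sphere' c R θ), dist_eq_norm (circleMap c R θ)] at this
      linarith
    rw [smul_comm, norm_smul, norm_inv]
    exact mul_le_of_le_one_left (norm_nonneg _) (inv_le_one_of_one_le₀ hdist)
  · refine .of_forall fun θ _ => ?_
    rw [comap_norm_atTop]
    simpa using ((tendsto_inv₀_cobounded.comp
      (tendsto_const_sub_cobounded (circleMap c R θ))).smul_const
        (f (circleMap c R θ))).const_smul (deriv (circleMap c R) θ)

lemma circleIntegral_inv_sub_eq_zero (hR : 0 ≤ R) (hz : z ∉ closedBall c R) :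
    ∮ w in C(c, R), (w - z)⁻¹ = 0 := by
  refine DiffContOnCl.circleIntegral_eq_zero hR (DifferentiableOn.diffContOnCl fun w hw => ?_)
  refine ((differentiableAt_id.sub_const z).inv fun h => hz ?_).differentiableWithinAt
  exact sub_eq_zero.1 h ▸ closure_ball_subset_closedBall hw

lemma differentiableOn_cauchyTransform_ball (hR : 0 ≤ R) (hf : CircleIntegrable f c R) :
    DifferentiableOn ℂ (cauchyTransform f c R) (ball c R) := fun _ hz =>
  (differentiableAt_cauchyTransform hf fun h =>
    (mem_ball.1 hz).ne (h.trans (abs_of_nonneg hR))).differentiableWithinAt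

lemma differentiableOn_cauchyTransform_compl_closedBall (hR : 0 ≤ R)
    (hf : CircleIntegrable f c R) :
    DifferentiableOn ℂ (cauchyTransform f c R) (closedBall c R)ᶜ := fun _ hz =>
  (differentiableAt_cauchyTransform hf fun h =>
    hz (h.trans (abs_of_nonneg hR)).le).differentiableWithinAt

lemma circleIntegrable_of_diffContOnCl_annulus (hr : 0 < r) (hrR : r < R)
    (hf : DiffContOnCl ℂ f (ball c R \ closedBall c r)) {ρ : ℝ} (hρ : ρ ∈ Set.Icc r R) :
    CircleIntegrable f c ρ := by
  refine (hf.continuousOn.mono fun w hw => closedBall_diff_ball_subset_closure c hr hrR ?_)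
    |>.circleIntegrable (hr.le.trans hρ.1)
  exact ⟨(mem_sphere.1 hw).trans_le hρ.2, fun h => (mem_ball.1 h).not_ge (hw.symm ▸ hρ.1)⟩

variable [CompleteSpace E]

lemma circleIntegral_dslope (hR : 0 ≤ R) (hf : CircleIntegrable f c R) (hz : z ∉ sphere c R) :
    ∮ w in C(c, R), dslope f z w =
      (∮ w in C(c, R), (w - z)⁻¹ • f w) - (∮ w in C(c, R), (w - z)⁻¹) • f z := by
  rw [← abs_of_nonneg hR] at hz
  rw [← circleIntegral.integral_smul_const, ← circleIntegral.integral_sub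
    (circleIntegrable_inv_sub_smul hf hz)
    (circleIntegrable_inv_sub_smul (circleIntegrable_const _ _ _) hz)]
  refine circleIntegral.integral_congr hR fun w hw => ?_
  have hwz : w ≠ z := fun h => hz (h ▸ (abs_of_nonneg hR).symm ▸ hw)
  simp only [dslope_of_ne f hwz, slope_def_module, smul_sub]

lemma cauchyTransform_sub_cauchyTransform (hr : 0 < r) (hrR : r < R)
    (hf : DiffContOnCl ℂ f (ball c R \ closedBall c r)) (hz : z ∈ ball c R \ closedBall c r) :
    cauchyTransform f c R z - cauchyTransform f c r z = f z := by
  have hopen : IsOpen (ball c R \ closedBall c r) := isOpen_ball.sdiff isClosed_closedBall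
  have hcont : ContinuousOn f (closedBall c R \ ball c r) :=
    hf.continuousOn.mono (closedBall_diff_ball_subset_closure c hr hrR)
  have hnhds : closedBall c R \ ball c r ∈ 𝓝 z := mem_of_superset (hopen.mem_nhds hz)
    (Set.sdiff_subset_sdiff ball_subset_closedBall ball_subset_closedBall)
  have hdslope : ∮ w in C(c, R), dslope f z w = ∮ w in C(c, r), dslope f z w :=
    Complex.circleIntegral_eq_of_differentiable_on_annulus_off_countable hr hrR.le
      (Set.countable_singleton z)
      ((continuousOn_dslope hnhds).2 ⟨hcont, hf.differentiableAt hopen hz⟩)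
      fun w hw => (differentiableAt_dslope_of_ne hw.2).2 (hf.differentiableAt hopen hw.1)
  rw [circleIntegral_dslope (hr.trans hrR).le
      (circleIntegrable_of_diffContOnCl_annulus hr hrR hf ⟨hrR.le, le_rfl⟩)
      fun h => (mem_ball.1 hz.1).ne h,
    circleIntegral_dslope hr.le
      (circleIntegrable_of_diffContOnCl_annulus hr hrR hf ⟨le_rfl, hrR.le⟩)
      fun h => hz.2 (sphere_subset_closedBall h),
    circleIntegral.integral_sub_inv_of_mem_ball hz.1, circleIntegral_inv_sub_eq_zero hr.le hz.2,
    zero_smul, sub_zero, sub_eq_iff_eq_add, add_comm, ← sub_eq_iff_eq_add] at hdslope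
  rw [cauchyTransform, cauchyTransform, ← smul_sub, hdslope,
    inv_smul_smul₀ Complex.two_pi_I_ne_zero]

end CauchyTransform

section Uniqueness

lemma eqOn_of_add_eqOn_add {U K : Set ℂ} (hU : IsOpen U) (hK : IsCompact K) (hKU : K ⊆ U)
    {f f' g g' : ℂ → E} (hf : DifferentiableOn ℂ f U) (hf' : DifferentiableOn ℂ f' U)
    (hg : DifferentiableOn ℂ g Kᶜ) (hg' : DifferentiableOn ℂ g' Kᶜ)
    (hg₀ : Tendsto g (cocompact ℂ) (𝓝 0)) (hg₀' : Tendsto g' (cocompact ℂ) (𝓝 0))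
    (heq : Set.EqOn (f + g) (f' + g') (U \ K)) : Set.EqOn f f' U ∧ Set.EqOn g g' Kᶜ := by
  classical
  let glued : ℂ → E := K.piecewise (f - f') (g' - g)
  have glued_compl : Set.EqOn glued (g' - g) Kᶜ := Set.piecewise_eqOn_compl _ _ _
  have glued_U : Set.EqOn glued (f - f') U := fun z hz => by
    by_cases hzK : z ∈ K
    · exact Set.piecewise_eq_of_mem _ _ _ hzK
    · rw [glued_compl hzK, Pi.sub_apply, Pi.sub_apply, sub_eq_sub_iff_add_eq_add, add_comm]
      exact (heq ⟨hz, hzK⟩).symm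
  have hdiff : Differentiable ℂ glued := fun z => by
    by_cases hzK : z ∈ K
    · exact ((hf.sub hf').congr glued_U).differentiableAt (hU.mem_nhds (hKU hzK))
    · exact ((hg'.sub hg).congr glued_compl).differentiableAt
        (hK.isClosed.isOpen_compl.mem_nhds hzK)
  have hlim : Tendsto glued (cocompact ℂ) (𝓝 0) := by
    refine Tendsto.congr' ?_ (by simpa using! hg₀'.sub hg₀)
    filter_upwards [hK.compl_mem_cocompact] with z hz using (glued_compl hz).symm
  have hzero (z : ℂ) : glued z = 0 := hdiff.apply_eq_of_tendsto_cocompact z hlim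
  exact ⟨fun z hz => sub_eq_zero.1 ((glued_U hz).symm.trans (hzero z)),
    fun z hz => (sub_eq_zero.1 ((glued_compl hz).symm.trans (hzero z))).symm⟩

lemma eqOn_of_add_sum_eqOn_add_sum {ι : Type*} [Fintype ι] {U : Set ℂ} {K : ι → Set ℂ}
    (hU : IsOpen U) (hK : ∀ i, IsCompact (K i)) (hKU : ∀ i, K i ⊆ U)
    (hdisj : Pairwise fun i j => Disjoint (K i) (K j)) {f f' : ℂ → E} {g g' : ι → ℂ → E}
    (hf : DifferentiableOn ℂ f U) (hf' : DifferentiableOn ℂ f' U)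
    (hg : ∀ i, DifferentiableOn ℂ (g i) (K i)ᶜ) (hg' : ∀ i, DifferentiableOn ℂ (g' i) (K i)ᶜ)
    (hg₀ : ∀ i, Tendsto (g i) (cocompact ℂ) (𝓝 0))
    (hg₀' : ∀ i, Tendsto (g' i) (cocompact ℂ) (𝓝 0))
    (heq : Set.EqOn (f + ∑ i, g i) (f' + ∑ i, g' i) (U \ ⋃ i, K i)) :
    Set.EqOn f f' U ∧ ∀ i, Set.EqOn (g i) (g' i) (K i)ᶜ := by
  classical
  constructor
  · exact (eqOn_of_add_eqOn_add hU (isCompact_iUnion hK) (Set.iUnion_subset hKU) hf hf'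
      (differentiableOn_sum_compl_iUnion hg) (differentiableOn_sum_compl_iUnion hg')
      (tendsto_sum_zero fun i _ => hg₀ i) (tendsto_sum_zero fun i _ => hg₀' i) heq).1
  · intro i
    refine (eqOn_of_add_eqOn_add (isOpen_diff_iUnion_ne hU (fun j => (hK j).isClosed) i) (hK i)
      (subset_diff_iUnion_ne hKU hdisj i)
      ((hf.mono Set.sdiff_subset).add (differentiableOn_sum_erase hg i))
      ((hf'.mono Set.sdiff_subset).add (differentiableOn_sum_erase hg' i))
      (hg i) (hg' i) (hg₀ i) (hg₀' i) ?_).2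
    simpa only [diff_iUnion_ne_diff, add_assoc, Finset.sum_erase_add _ _ (Finset.mem_univ i)]
      using heq

end Uniqueness

section Existence

variable [CompleteSpace E]

lemma exists_eqOn_cauchyTransform {c : ℂ} {r R : ℝ} (hr : 0 < r) (hrR : r < R) {h : ℂ → E}
    (hh : DiffContOnCl ℂ h (ball c R \ closedBall c r)) :
    ∃ F : ℂ → E, Set.EqOn F (-cauchyTransform h c r) (closedBall c r)ᶜ ∧
      Set.EqOn (h - F) (cauchyTransform h c R) (ball c R) := by
  classical
  -- `F` absorbs the junk values of `h` inside the hole, so that `h - F` is regular there.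
  let F : ℂ → E := (ball c R).piecewise (h - cauchyTransform h c R) (-cauchyTransform h c r)
  have F_ball : Set.EqOn F (h - cauchyTransform h c R) (ball c R) := Set.piecewise_eqOn _ _ _
  refine ⟨F, fun z hz => ?_, fun z hz => ?_⟩
  · by_cases hzR : z ∈ ball c R
    · rw [F_ball hzR, Pi.sub_apply, Pi.neg_apply,
        ← cauchyTransform_sub_cauchyTransform hr hrR hh ⟨hzR, hz⟩, sub_sub_cancel_left]
    · exact Set.piecewise_eq_of_notMem _ _ _ hzR
  · rw [Pi.sub_apply, F_ball hz, Pi.sub_apply, sub_sub_cancel]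

lemma exists_principalPart {U : Set ℂ} (hU : IsOpen U) {c : ℂ} {r : ℝ} (hr : 0 < r)
    (hsub : closedBall c r ⊆ U) {h : ℂ → E} (hh : DiffContOnCl ℂ h (U \ closedBall c r)) :
    ∃ F : ℂ → E, DiffContOnCl ℂ F (closedBall c r)ᶜ ∧ Tendsto F (cocompact ℂ) (𝓝 0) ∧
      DifferentiableOn ℂ (h - F) U := by
  obtain ⟨R, hrR, hRU⟩ := exists_gt_closedBall_subset hU hr.le hsub
  have hball : ball c R ⊆ U := ball_subset_closedBall.trans hRU
  have hann : DiffContOnCl ℂ h (ball c R \ closedBall c r) :=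
    hh.mono (Set.sdiff_subset_sdiff_left hball)
  obtain ⟨F, hF, hhF⟩ := exists_eqOn_cauchyTransform hr hrR hann
  have hinner : CircleIntegrable h c r :=
    circleIntegrable_of_diffContOnCl_annulus hr hrR hann ⟨le_rfl, hrR.le⟩
  have hF_diff : DifferentiableOn ℂ F (closedBall c r)ᶜ :=
    (differentiableOn_cauchyTransform_compl_closedBall hr.le hinner).neg.congr hF
  have hhF_diff : DifferentiableOn ℂ (h - F) (ball c R) :=
    (differentiableOn_cauchyTransform_ball (hr.trans hrR).le
      (circleIntegrable_of_diffContOnCl_annulus hr hrR hann ⟨hrR.le, le_rfl⟩)).congr hhF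
  refine ⟨F, diffContOnCl_of_frontier_subset (V := ball c R) isClosed_closedBall.isOpen_compl
    isOpen_ball ?_ hF_diff ?_, ?_, ?_⟩
  · rw [frontier_compl]
    exact isClosed_closedBall.frontier_subset.trans (closedBall_subset_ball hrR)
  · have hh_cont : ContinuousOn h (closure (closedBall c r)ᶜ ∩ ball c R) :=
      hh.continuousOn.mono fun z hz => hU.inter_closure ⟨hball hz.2, hz.1⟩
    simpa only [sub_sub_cancel] using
      hh_cont.sub (hhF_diff.continuousOn.mono Set.inter_subset_right)
  · refine Tendsto.congr' ?_ (neg_zero (G := E) ▸ (tendsto_cauchyTransform_cocompact hinner).neg)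
    filter_upwards [(isCompact_closedBall c r).compl_mem_cocompact] with z hz using (hF hz).symm
  · refine (hhF_diff.union_of_isOpen (hh.differentiableOn.sub (hF_diff.mono fun z hz => hz.2))
      isOpen_ball (hU.sdiff isClosed_closedBall)).mono fun z hz => ?_
    exact (em (z ∈ closedBall c r)).imp (closedBall_subset_ball hrR ·) (⟨hz, ·⟩)

lemma exists_principalParts {ι : Type*} [Fintype ι] {U : Set ℂ} (hU : IsOpen U) {c : ι → ℂ}
    {r : ι → ℝ} (hr : ∀ i, 0 < r i) (hsub : ∀ i, closedBall (c i) (r i) ⊆ U)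
    (hdisj : Pairwise fun i j => Disjoint (closedBall (c i) (r i)) (closedBall (c j) (r j)))
    {h : ℂ → E} (hh : DiffContOnCl ℂ h (U \ ⋃ i, closedBall (c i) (r i))) :
    ∃ F : ι → ℂ → E, (∀ i, DiffContOnCl ℂ (F i) (closedBall (c i) (r i))ᶜ) ∧
      (∀ i, Tendsto (F i) (cocompact ℂ) (𝓝 0)) ∧ DiffContOnCl ℂ (h - ∑ i, F i) U := by
  classical
  let K (i : ι) : Set ℂ := closedBall (c i) (r i)
  have hK (i : ι) : IsClosed (K i) := isClosed_closedBall
  have hUi (i : ι) : IsOpen (U \ ⋃ j ≠ i, K j) := isOpen_diff_iUnion_ne hU hK i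
  have hKi (i : ι) : K i ⊆ U \ ⋃ j ≠ i, K j := subset_diff_iUnion_ne hsub hdisj i
  have hunion : IsClosed (⋃ i, K i) := isClosed_iUnion_of_finite hK
  choose F hF hF₀ hhF using fun i => exists_principalPart (hUi i) (hr i) (hKi i)
    (h := h) (by rwa [diff_iUnion_ne_diff])
  have hsum : DiffContOnCl ℂ (∑ i, F i) (⋃ i, K i)ᶜ := diffContOnCl_sum fun i _ =>
    (hF i).mono (Set.compl_subset_compl.2 (Set.subset_iUnion K i))
  refine ⟨F, hF, hF₀, diffContOnCl_of_frontier_subset hU hunion.isOpen_compl ?_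
    (fun z hz => DifferentiableAt.differentiableWithinAt ?_) ?_⟩
  · rw [hU.frontier_eq]
    exact fun z hz hzK => hz.2 (Set.iUnion_subset hsub hzK)
  · by_cases hzK : z ∈ ⋃ i, K i
    · obtain ⟨i, hzi⟩ := Set.mem_iUnion.1 hzK
      rw [← Finset.add_sum_erase _ _ (Finset.mem_univ i), ← sub_sub]
      exact ((hhF i).sub (differentiableOn_sum_erase (fun j => (hF j).differentiableOn)
        i)).differentiableAt ((hUi i).mem_nhds (hKi i hzi))
    · exact (hh.differentiableOn.sub (hsum.differentiableOn.mono fun w hw => hw.2)).differentiableAt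
        ((hU.sdiff hunion).mem_nhds ⟨hz, hzK⟩)
  · refine (hh.continuousOn.mono fun z hz => ?_).sub
      (hsum.continuousOn.mono fun z hz => subset_closure hz.2)
    have := hunion.isOpen_compl.inter_closure ⟨hz.2, hz.1⟩
    rwa [Set.inter_comm] at this

end Existence

section Decomposition

variable [CompleteSpace E]

lemma eqOn_cauchyTransform {c : ℂ} {R : ℝ} (hR : 0 < R) {K : Set ℂ} (hK : IsClosed K)
    (hKR : K ⊆ ball c R) {h f g : ℂ → E} (hh : DiffContOnCl ℂ h (ball c R \ K))
    (hf : DifferentiableOn ℂ f (ball c R)) (hg : DifferentiableOn ℂ g Kᶜ)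
    (hg₀ : Tendsto g (cocompact ℂ) (𝓝 0)) (hfg : Set.EqOn h (f + g) (ball c R \ K)) :
    Set.EqOn f (cauchyTransform h c R) (ball c R) := by
  obtain ⟨r, ⟨hr, hrR⟩, hKr⟩ := exists_pos_lt_subset_ball hR hK hKR
  replace hKr : K ⊆ closedBall c r := hKr.trans ball_subset_closedBall
  have hann : DiffContOnCl ℂ h (ball c R \ closedBall c r) :=
    hh.mono (Set.sdiff_subset_sdiff_right hKr)
  have hinner := circleIntegrable_of_diffContOnCl_annulus hr hrR hann ⟨le_rfl, hrR.le⟩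
  have houter := circleIntegrable_of_diffContOnCl_annulus hr hrR hann ⟨hrR.le, le_rfl⟩
  refine (eqOn_of_add_eqOn_add isOpen_ball (isCompact_closedBall c r) (closedBall_subset_ball hrR)
    hf (differentiableOn_cauchyTransform_ball hR.le houter)
    (hg.mono (Set.compl_subset_compl.2 hKr))
    (differentiableOn_cauchyTransform_compl_closedBall hr.le hinner).neg hg₀
    (neg_zero (G := E) ▸ (tendsto_cauchyTransform_cocompact hinner).neg) fun z hz => ?_).1
  calc (f + g) z = h z := (hfg ⟨hz.1, fun hzK => hz.2 (hKr hzK)⟩).symm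
    _ = cauchyTransform h c R z - cauchyTransform h c r z :=
      (cauchyTransform_sub_cauchyTransform hr hrR hann hz).symm
    _ = (cauchyTransform h c R + -cauchyTransform h c r) z := sub_eq_add_neg _ _

theorem circular_region_decomposition_general {ι : Type*} [Fintype ι] {c₀ : ℂ} {r₀ : ℝ}
    (hr₀ : 0 < r₀) {c : ι → ℂ} {r : ι → ℝ} (hr : ∀ i, 0 < r i)
    (hsub : ∀ i, closedBall (c i) (r i) ⊆ ball c₀ r₀)
    (hdisj : Pairwise fun i j => Disjoint (closedBall (c i) (r i)) (closedBall (c j) (r j)))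
    {h : ℂ → E} (hh : DiffContOnCl ℂ h (ball c₀ r₀ \ ⋃ i, closedBall (c i) (r i))) :
    ∃ (h₁ : ℂ → E) (hin : ι → ℂ → E), DiffContOnCl ℂ h₁ (ball c₀ r₀) ∧
      (∀ i, DiffContOnCl ℂ (hin i) (closedBall (c i) (r i))ᶜ ∧
        Tendsto (hin i) (cocompact ℂ) (𝓝 0)) ∧
      Set.EqOn h (h₁ + ∑ i, hin i) (closure (ball c₀ r₀ \ ⋃ i, closedBall (c i) (r i))) ∧
      Set.EqOn h₁ (cauchyTransform h c₀ r₀) (ball c₀ r₀) ∧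
      ∀ (h₁' : ℂ → E) (hin' : ι → ℂ → E), DiffContOnCl ℂ h₁' (ball c₀ r₀) →
        (∀ i, DiffContOnCl ℂ (hin' i) (closedBall (c i) (r i))ᶜ ∧
          Tendsto (hin' i) (cocompact ℂ) (𝓝 0)) →
        Set.EqOn h (h₁' + ∑ i, hin' i) (closure (ball c₀ r₀ \ ⋃ i, closedBall (c i) (r i))) →
        Set.EqOn h₁' h₁ (closedBall c₀ r₀) ∧
          ∀ i, Set.EqOn (hin' i) (hin i) (ball (c i) (r i))ᶜ := by
  obtain ⟨hin, hin_diff, hin_zero, h₁_diff⟩ := exists_principalParts isOpen_ball hr hsub hdisj hh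
  refine ⟨h - ∑ i, hin i, hin, h₁_diff, fun i => ⟨hin_diff i, hin_zero i⟩,
    fun z _ => (congrFun (sub_add_cancel h _) z).symm, ?_, fun h₁' hin' h₁'_diff hhin' heq => ?_⟩
  · exact eqOn_cauchyTransform hr₀ (isClosed_iUnion_of_finite fun _ => isClosed_closedBall)
      (Set.iUnion_subset hsub) hh h₁_diff.differentiableOn
      (differentiableOn_sum_compl_iUnion fun i => (hin_diff i).differentiableOn)
      (tendsto_sum_zero fun i _ => hin_zero i) fun z _ => (congrFun (sub_add_cancel h _) z).symm
  · obtain ⟨heq₁, heqin⟩ := eqOn_of_add_sum_eqOn_add_sum isOpen_ball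
      (fun i => isCompact_closedBall (c i) (r i)) hsub hdisj h₁'_diff.differentiableOn
      h₁_diff.differentiableOn (fun i => (hhin' i).1.differentiableOn)
      (fun i => (hin_diff i).differentiableOn) (fun i => (hhin' i).2) hin_zero
      (fun z hz => by rw [← heq (subset_closure hz), sub_add_cancel])
    refine ⟨?_, fun i => ?_⟩
    · rw [← closure_ball c₀ hr₀.ne']
      exact eqOn_closure_of_diffContOnCl h₁'_diff h₁_diff heq₁
    · rw [← closure_compl_closedBall (c i) (hr i).ne']
      exact eqOn_closure_of_diffContOnCl (hhin' i).1 (hin_diff i) (heqin i)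

end Decomposition

/-- Laurent-type decomposition of holomorphic functions on a circular region
(as in Proposition `Cech-zero-cycles`): a circular region `G` is the open disk
`B₁ = B(c₀,r₀)` with `m` pairwise disjoint closed disks `B̄(cᵢ,rᵢ) ⊆ B₁` removed
(total number of disks `k = m + 1 ≥ 1`).  Every `h` continuous on `Ḡ` and holomorphic on
`G` decomposes uniquely as `h = h₁ + Σᵢ hᵢ` with `h₁ ∈ 𝒪_(c)(B̄₁)` and each `hᵢ`
continuous on `ℂ ∖ Bᵢ`, holomorphic on `ℂ ∖ B̄ᵢ` and vanishing at infinity; moreover `h₁`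
is given by the Cauchy integral of `h` over `∂B₁`. -/
theorem circular_region_decomposition
    (m : ℕ) (c₀ : ℂ) (r₀ : ℝ) (hr₀ : 0 < r₀)
    (c : Fin m → ℂ) (r : Fin m → ℝ) (hr : ∀ i, 0 < r i)
    (hsub : ∀ i, closedBall (c i) (r i) ⊆ ball c₀ r₀)
    (hdisj : ∀ i j, i ≠ j → Disjoint (closedBall (c i) (r i)) (closedBall (c j) (r j)))
    (G : Set ℂ) (hG : G = ball c₀ r₀ \ ⋃ i, closedBall (c i) (r i))
    (h : ℂ → ℂ) (hcont : ContinuousOn h (closure G)) (hhol : DifferentiableOn ℂ h G) :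
    ∃ (h₁ : ℂ → ℂ) (hin : Fin m → ℂ → ℂ),
      -- h₁ ∈ 𝒪_(c)(B̄₁)
      ContinuousOn h₁ (closedBall c₀ r₀) ∧ DifferentiableOn ℂ h₁ (ball c₀ r₀) ∧
      -- hᵢ continuous on ℂ ∖ Bᵢ, holomorphic on ℂ ∖ B̄ᵢ, vanishing at infinity
      (∀ i, ContinuousOn (hin i) (ball (c i) (r i))ᶜ ∧
            DifferentiableOn ℂ (hin i) (closedBall (c i) (r i))ᶜ ∧
            Tendsto (hin i) (cocompact ℂ) (𝓝 0)) ∧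
      -- the decomposition h = h₁ + Σᵢ hᵢ on Ḡ
      (∀ z ∈ closure G, h z = h₁ z + ∑ i, hin i z) ∧
      -- h₁ is given by the Cauchy integral over ∂B₁
      (∀ z ∈ ball c₀ r₀,
        h₁ z = (2 * (Real.pi : ℂ) * Complex.I)⁻¹ * ∮ w in C(c₀, r₀), h w / (w - z)) ∧
      -- uniqueness of the decomposition
      (∀ (h₁' : ℂ → ℂ) (hin' : Fin m → ℂ → ℂ),
        ContinuousOn h₁' (closedBall c₀ r₀) → DifferentiableOn ℂ h₁' (ball c₀ r₀) →
        (∀ i, ContinuousOn (hin' i) (ball (c i) (r i))ᶜ ∧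
              DifferentiableOn ℂ (hin' i) (closedBall (c i) (r i))ᶜ ∧
              Tendsto (hin' i) (cocompact ℂ) (𝓝 0)) →
        (∀ z ∈ closure G, h z = h₁' z + ∑ i, hin' i z) →
        (∀ z ∈ closedBall c₀ r₀, h₁' z = h₁ z) ∧
        (∀ i, ∀ z ∈ (ball (c i) (r i))ᶜ, hin' i z = hin i z)) := by
  subst hG
  simpa [diffContOnCl_ball_iff hr₀.ne', diffContOnCl_compl_closedBall_iff (hr _).ne',
    cauchyTransform, Set.EqOn, div_eq_inv_mul, and_assoc] using
    circular_region_decomposition_general hr₀ hr hsub hdisj ⟨hhol, hcont⟩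
end

section
/- (Inhomogeneous Cauchy integral formula on the unit disk.) Let f be a complex-valued function which is continuously differentiable on an open neighbourhood of the closed unit disk 𝔻̄ ⊆ ℂ. Then for every z with |z| < 1: f(z) = (1/2πi) ∮_{|w|=1} f(w)/(w−z) dw − (1/π) ∫_𝔻 (∂̄f)(w)/(w−z) dμ(w), where the circle integral is taken counterclockwise. -/
open Metric MeasureTheory

/-!
The Cauchy kernel `1 / (w - z)` is replaced by the smooth kernels
`k_t w = conj (w - z) / (|w - z| ^ 2 + t)`, `t > 0`, for which `∂̄ k_t = t / (|w - z| ^ 2 + t) ^ 2`.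
After subtracting `f z` from `f` we may assume `f z = 0`, so that `|f w| ≤ C |w - z|` and both
`k_t ∂̄f` and `(∂̄ k_t) f` are dominated by integrable multiples of `1 / |w - z|`. Green's formula
`∮ k_t f = 2i ∫ ∂̄(k_t f)`, which is the divergence theorem in polar coordinates, then passes to the
limit `t → 0`, and the term `∫ (∂̄ k_t) f` disappears.
-/

open Set Filter Topology
open Complex (I)
open scoped Real ComplexConjugate

variable {E : Type*} [NormedAddCommGroup E] [NormedSpace ℂ E]

/-- The Wirtinger derivative `∂f/∂w̄ = (∂f/∂x + i ∂f/∂y) / 2` of a function on the plane, with the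
junk values of `fderiv` where `f` is not real differentiable. -/
noncomputable def dbar (f : ℂ → E) (w : ℂ) : E :=
  (1 / 2 : ℂ) • (fderiv ℝ f w 1 + I • fderiv ℝ f w I)

theorem apply_add_I_smul_apply_I_mul (L : ℂ →L[ℝ] E) (v : ℂ) :
    L v + I • L (I * v) = conj v • (L 1 + I • L I) := by
  have hv : v = v.re • (1 : ℂ) + v.im • I := by simp
  have hIv : I * v = (-v.im) • (1 : ℂ) + v.re • I := by
    apply Complex.ext <;> simp
  have hconj : conj v = v.re - v.im * I := by
    apply Complex.ext <;> simp
  rw [hIv, hconj, congrArg L hv]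
  simp only [map_add, map_smul]
  simp only [← Complex.coe_smul, Complex.ofReal_neg]
  match_scalars
  · ring
  · linear_combination (v.im : ℂ) * Complex.I_sq

theorem fderiv_add_I_smul_fderiv (f : ℂ → E) (w v : ℂ) :
    fderiv ℝ f w v + I • fderiv ℝ f w (I * v) = (2 * conj v) • dbar f w := by
  rw [apply_add_I_smul_apply_I_mul, dbar, smul_smul]
  ring_nf

theorem dbar_sub_const (f : ℂ → E) (a : E) (w : ℂ) : dbar (fun v => f v - a) w = dbar f w := by
  simp only [dbar, fderiv_sub_const]

theorem dbar_smul {g : ℂ → ℂ} {f : ℂ → E} {w : ℂ} (hg : DifferentiableAt ℝ g w)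
    (hf : DifferentiableAt ℝ f w) :
    dbar (fun v => g v • f v) w = g w • dbar f w + dbar g w • f w := by
  simp only [dbar, fderiv_fun_smul hg hf, add_apply, smul_apply,
    ContinuousLinearMap.smulRight_apply, smul_eq_mul]
  module

theorem continuousOn_dbar {f : ℂ → E} {U : Set ℂ} (hf : ContDiffOn ℝ 1 f U) (hU : IsOpen U) :
    ContinuousOn (dbar f) U := by
  have hD : ContinuousOn (fderiv ℝ f) U := hf.continuousOn_fderiv_of_isOpen hU le_rfl
  unfold dbar
  fun_prop

theorem dbar_eq_zero_of_differentiableAt {f : ℂ → E} {w : ℂ} (hf : DifferentiableAt ℂ f w) :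
    dbar f w = 0 := by
  have hI : fderiv ℂ f w I = I • fderiv ℂ f w 1 := by
    rw [← map_smul, smul_eq_mul, mul_one]
  simp only [dbar, hf.fderiv_restrictScalars ℝ, ContinuousLinearMap.coe_restrictScalars', hI,
    smul_smul, Complex.I_mul_I, neg_smul, one_smul, add_neg_cancel, smul_zero]

theorem differentiable_conj_sub (z : ℂ) : Differentiable ℝ fun w => conj (w - z) :=
  Complex.conjCLE.differentiable.comp (differentiable_id.sub_const z)

theorem dbar_conj_sub (z w : ℂ) : dbar (fun v => conj (v - z)) w = 1 := by
  have hconj : fderiv ℝ (fun v => conj (v - z)) w = Complex.conjCLE.toContinuousLinearMap :=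
    (Complex.conjCLE.hasFDerivAt.comp w ((hasFDerivAt_id w).sub_const z)).fderiv
  rw [dbar, hconj]
  norm_num

/-! ### Polar coordinates -/

theorem circleMap_eq_add_polarCoord_symm (c : ℂ) (p : ℝ × ℝ) :
    circleMap c p.1 p.2 = c + Complex.polarCoord.symm p := by
  simp [circleMap, Complex.exp_mul_I]

theorem injOn_circleMap_polarCoord_target (c : ℂ) :
    InjOn (fun p : ℝ × ℝ => circleMap c p.1 p.2) polarCoord.target := by
  simp only [circleMap_eq_add_polarCoord_symm]
  exact (add_right_injective c).comp_injOn Complex.polarCoord.symm.injOn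

theorem measurePreserving_circleMap (c : ℂ) :
    MeasurePreserving (fun p : ℝ × ℝ => circleMap c p.1 p.2)
      ((volume.restrict polarCoord.target).withDensity fun p => ENNReal.ofReal p.1) volume := by
  have hmeas : Measurable fun p : ℝ × ℝ => circleMap c p.1 p.2 := by
    unfold circleMap
    fun_prop
  refine ⟨hmeas, Measure.ext_of_lintegral _ fun f hf => ?_⟩
  calc ∫⁻ w, f w ∂(Measure.map _ _)
      = ∫⁻ p, f (circleMap c p.1 p.2)
          ∂(volume.restrict polarCoord.target).withDensity fun p => ENNReal.ofReal p.1 :=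
        lintegral_map hf hmeas
    _ = ∫⁻ p in polarCoord.target, ENNReal.ofReal p.1 • f (c + Complex.polarCoord.symm p) := by
        simp only [← circleMap_eq_add_polarCoord_symm]
        exact lintegral_withDensity_eq_lintegral_mul _ (by fun_prop) (hf.comp hmeas)
    _ = ∫⁻ w, f (c + w) := Complex.lintegral_comp_polarCoord_symm fun w => f (c + w)
    _ = ∫⁻ w, f w := lintegral_add_left_eq_self f c

theorem measurePreserving_circleMap_ball (c : ℂ) (R : ℝ) :
    MeasurePreserving (fun p : ℝ × ℝ => circleMap c p.1 p.2)
      ((volume.restrict (Ioo 0 R ×ˢ Ioo (-π) π)).withDensity fun p => ENNReal.ofReal p.1)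
      (volume.restrict (ball c R)) := by
  have hball : MeasurableSet ((fun p : ℝ × ℝ => circleMap c p.1 p.2) ⁻¹' ball c R) :=
    (measurePreserving_circleMap c).measurable measurableSet_ball
  have hpre : (fun p : ℝ × ℝ => circleMap c p.1 p.2) ⁻¹' ball c R ∩ polarCoord.target =
      Ioo 0 R ×ˢ Ioo (-π) π := by
    ext ⟨r, θ⟩
    simp only [mem_inter_iff, mem_preimage, mem_ball_iff_norm, circleMap_sub_center,
      norm_circleMap_zero, polarCoord_target, mem_prod, mem_Ioi, mem_Ioo, abs_lt]
    grind
  have h := (measurePreserving_circleMap c).restrict_preimage (measurableSet_ball (x := c) (ε := R))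
  rwa [restrict_withDensity hball, Measure.restrict_restrict hball, hpre] at h

section Polar

variable {F : Type*} [NormedAddCommGroup F] [NormedSpace ℝ F] {f : ℂ → F} {c : ℂ} {R : ℝ}

theorem integrableOn_smul_comp_circleMap (hf : IntegrableOn f (ball c R)) :
    IntegrableOn (fun p : ℝ × ℝ => p.1 • f (circleMap c p.1 p.2)) (Ioo 0 R ×ˢ Ioo (-π) π) := by
  have h := (measurePreserving_circleMap_ball c R).integrable_comp_of_integrable hf
  rw [integrable_withDensity_iff_integrable_smul' (by fun_prop) (by simp)] at h
  refine IntegrableOn.congr_fun h (fun p hp => ?_) (measurableSet_Ioo.prod measurableSet_Ioo)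
  rw [Function.comp_apply, ENNReal.toReal_ofReal hp.1.1.le]

theorem setIntegral_ball_eq_setIntegral_circleMap (hf : IntegrableOn f (ball c R)) :
    ∫ w in ball c R, f w =
      ∫ p in Ioo 0 R ×ˢ Ioo (-π) π, p.1 • f (circleMap c p.1 p.2) := by
  have hpolar := measurePreserving_circleMap_ball c R
  rw [← hpolar.map_eq, integral_map hpolar.aemeasurable
    (by rw [hpolar.map_eq]; exact hf.aestronglyMeasurable),
    integral_withDensity_eq_integral_toReal_smul (by fun_prop) (by simp)]
  refine setIntegral_congr_fun (measurableSet_Ioo.prod measurableSet_Ioo) fun p hp => ?_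
  rw [ENNReal.toReal_ofReal hp.1.1.le]

end Polar

theorem hasFDerivAt_circleMap_prod (c : ℂ) (p : ℝ × ℝ) :
    HasFDerivAt (fun p : ℝ × ℝ => circleMap c p.1 p.2)
      ((ContinuousLinearMap.fst ℝ ℝ ℝ).smulRight (circleMap 0 1 p.2) +
        (ContinuousLinearMap.snd ℝ ℝ ℝ).smulRight (circleMap 0 p.1 p.2 * I)) p := by
  have hradius := Complex.ofRealCLM.hasFDerivAt.comp p (hasFDerivAt_fst (𝕜 := ℝ) (p := p))
  have hangle := (hasDerivAt_circleMap 0 1 p.2).hasFDerivAt.comp p (hasFDerivAt_snd (𝕜 := ℝ))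
  refine (((hradius.mul hangle).const_add c).congr_fderiv ?_).congr_of_eventuallyEq ?_
  · ext
    · simp [circleMap]
    · simp only [Function.comp_apply, Complex.ofRealCLM_apply, circleMap, Complex.ofReal_one,
        one_mul, zero_add, ContinuousLinearMap.add_comp, ContinuousLinearMap.smul_comp, add_apply,
        smul_apply, ContinuousLinearMap.comp_apply, ContinuousLinearMap.inr_apply,
        ContinuousLinearMap.coe_snd', ContinuousLinearMap.toSpanSingleton_apply, one_smul,
        smul_eq_mul, ContinuousLinearMap.coe_fst', Complex.ofReal_zero, mul_zero, add_zero,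
        ContinuousLinearMap.smulRight_apply, zero_smul]
      ring
  · filter_upwards with q
    simp [circleMap]

/-! ### Green's formula on a disk -/

theorem continuous_circleMap_prod (c : ℂ) : Continuous fun p : ℝ × ℝ => circleMap c p.1 p.2 := by
  unfold circleMap
  fun_prop

theorem circleIntegral_eq_I_smul_intervalIntegral (f : ℂ → E) (c : ℂ) (R : ℝ) :
    (∮ w in C(c, R), f w) = I • ∫ θ in (-π)..π, circleMap 0 R θ • f (circleMap c R θ) := by
  have hperiodic : Function.Periodic (fun θ => circleMap 0 R θ • f (circleMap c R θ)) (2 * π) :=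
    fun θ => by simp only [periodic_circleMap _ _ θ]
  have hshift := hperiodic.intervalIntegral_add_eq 0 (-π)
  rw [zero_add, show -π + 2 * π = π by ring] at hshift
  rw [circleIntegral, ← hshift, ← intervalIntegral.integral_smul]
  simp only [deriv_circleMap, smul_smul, mul_comm]

theorem differentiableAt_comp_circleMap {f : ℂ → E} {c : ℂ} {p : ℝ × ℝ}
    (hf : DifferentiableAt ℝ f (circleMap c p.1 p.2)) :
    DifferentiableAt ℝ (fun q : ℝ × ℝ => f (circleMap c q.1 q.2)) p :=
  hf.comp p (hasFDerivAt_circleMap_prod c p).differentiableAt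

theorem differentiable_circleMap_one_mul_I :
    Differentiable ℝ fun q : ℝ × ℝ => circleMap 0 1 q.2 * I :=
  ((differentiable_circleMap 0 1).comp differentiable_snd).mul_const I

theorem differentiableAt_circleMap_smul_comp {f : ℂ → E} {c : ℂ} {p : ℝ × ℝ}
    (hf : DifferentiableAt ℝ f (circleMap c p.1 p.2)) :
    DifferentiableAt ℝ (fun q : ℝ × ℝ => circleMap 0 q.1 q.2 • f (circleMap c q.1 q.2)) p :=
  (hasFDerivAt_circleMap_prod 0 p).differentiableAt.fun_smul (differentiableAt_comp_circleMap hf)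

theorem differentiableAt_circleMap_one_mul_I_smul_comp {f : ℂ → E} {c : ℂ} {p : ℝ × ℝ}
    (hf : DifferentiableAt ℝ f (circleMap c p.1 p.2)) :
    DifferentiableAt ℝ (fun q : ℝ × ℝ => (circleMap 0 1 q.2 * I) • f (circleMap c q.1 q.2)) p :=
  (differentiable_circleMap_one_mul_I p).fun_smul (differentiableAt_comp_circleMap hf)

-- The two terms containing `f` itself cancel, because `∂/∂θ (I * exp (I * θ)) = -exp (I * θ)`.
theorem fderiv_radial_add_fderiv_angular_eq_dbar {f : ℂ → E} {c : ℂ} {p : ℝ × ℝ}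
    (hf : DifferentiableAt ℝ f (circleMap c p.1 p.2)) :
    fderiv ℝ (fun q : ℝ × ℝ => circleMap 0 q.1 q.2 • f (circleMap c q.1 q.2)) p (1, 0) +
        fderiv ℝ (fun q : ℝ × ℝ => (circleMap 0 1 q.2 * I) • f (circleMap c q.1 q.2)) p (0, 1) =
      p.1 • (2 : ℂ) • dbar f (circleMap c p.1 p.2) := by
  have hcomp : HasFDerivAt (fun q : ℝ × ℝ => f (circleMap c q.1 q.2)) _ p :=
    hf.hasFDerivAt.comp p (hasFDerivAt_circleMap_prod c p)
  have hangle : HasFDerivAt (fun q : ℝ × ℝ => circleMap 0 1 q.2 * I) _ p :=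
    ((hasDerivAt_circleMap 0 1 p.2).mul_const I).hasFDerivAt.comp p (hasFDerivAt_snd (𝕜 := ℝ))
  have hscale : circleMap 0 p.1 p.2 = p.1 • circleMap 0 1 p.2 := by
    simp [circleMap]
  have hdbar : circleMap 0 1 p.2 • (fderiv ℝ f (circleMap c p.1 p.2) (circleMap 0 1 p.2) +
      I • fderiv ℝ f (circleMap c p.1 p.2) (I * circleMap 0 1 p.2)) =
      (2 : ℂ) • dbar f (circleMap c p.1 p.2) := by
    rw [fderiv_add_I_smul_fderiv, smul_smul, mul_left_comm, Complex.mul_conj',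
      norm_circleMap_zero]
    norm_num
  have hlinear : fderiv ℝ f (circleMap c p.1 p.2) (I * (p.1 * circleMap 0 1 p.2)) =
      p.1 • fderiv ℝ f (circleMap c p.1 p.2) (I * circleMap 0 1 p.2) := by
    rw [← map_smul, Complex.real_smul, mul_left_comm]
  rw [((hasFDerivAt_circleMap_prod 0 p).fun_smul hcomp).fderiv, (hangle.fun_smul hcomp).fderiv,
    ← hdbar]
  simp only [hscale, Complex.real_smul, mul_comm _ I, ContinuousLinearMap.comp_add, smul_add,
    add_apply, smul_apply, ContinuousLinearMap.comp_apply, ContinuousLinearMap.smulRight_apply,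
    ContinuousLinearMap.coe_fst', one_smul, ContinuousLinearMap.coe_snd', zero_smul, map_zero,
    smul_zero, add_zero, hlinear, zero_add, ContinuousLinearMap.toSpanSingleton_apply]
  simp only [← Complex.coe_smul]
  match_scalars
  · ring
  · linear_combination circleMap 0 1 p.2 * Complex.I_sq
  · ring

theorem countable_polarCoord_target_inter_preimage_circleMap {s : Set ℂ} (hs : s.Countable)
    (c : ℂ) : (polarCoord.target ∩ (fun p => circleMap c p.1 p.2) ⁻¹' s).Countable :=
  MapsTo.countable_of_injOn (f := fun p : ℝ × ℝ => circleMap c p.1 p.2) (fun _ hp => hp.2)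
    ((injOn_circleMap_polarCoord_target c).mono inter_subset_left) hs

theorem continuousOn_comp_circleMap {X : Type*} [TopologicalSpace X] {f : ℂ → X} {c : ℂ}
    {R a b : ℝ} (hf : ContinuousOn f (closedBall c R)) :
    ContinuousOn (fun p : ℝ × ℝ => f (circleMap c p.1 p.2)) (Icc (0, a) (R, b)) :=
  hf.comp (continuous_circleMap_prod c).continuousOn fun p hp =>
    closedBall_subset_closedBall hp.2.1 (circleMap_mem_closedBall c hp.1.1 p.2)

theorem circleMap_mem_ball_diff {c : ℂ} {R : ℝ} {s : Set ℂ} {p : ℝ × ℝ}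
    (hp : p ∈ Ioo 0 R ×ˢ Ioo (-π) π \ (polarCoord.target ∩ (fun p => circleMap c p.1 p.2) ⁻¹' s)) :
    circleMap c p.1 p.2 ∈ ball c R \ s := by
  obtain ⟨⟨hr, hθ⟩, hps⟩ := hp
  refine ⟨?_, fun hs => hps ⟨⟨hr.1, hθ⟩, hs⟩⟩
  rw [mem_ball_iff_norm, circleMap_sub_center, norm_circleMap_zero, abs_of_pos hr.1]
  exact hr.2

theorem setIntegral_polar_dbar_eq_intervalIntegral {f : ℂ → E} {c : ℂ} {R : ℝ} {s : Set ℂ}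
    (hR : 0 ≤ R) (hs : s.Countable) (hc : ContinuousOn f (closedBall c R))
    (hd : ∀ w ∈ ball c R \ s, DifferentiableAt ℝ f w) (hi : IntegrableOn (dbar f) (ball c R)) :
    ∫ p in Ioo 0 R ×ˢ Ioo (-π) π, p.1 • (2 : ℂ) • dbar f (circleMap c p.1 p.2) =
      ∫ θ in (-π)..π, circleMap 0 R θ • f (circleMap c R θ) := by
  let F : ℝ × ℝ → E := fun p => circleMap 0 p.1 p.2 • f (circleMap c p.1 p.2)
  let G : ℝ × ℝ → E := fun p => (circleMap 0 1 p.2 * I) • f (circleMap c p.1 p.2)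
  let t : Set (ℝ × ℝ) := polarCoord.target ∩ (fun p => circleMap c p.1 p.2) ⁻¹' s
  have ht : t.Countable := countable_polarCoord_target_inter_preimage_circleMap hs c
  have hdt : ∀ p ∈ Ioo 0 R ×ˢ Ioo (-π) π \ t, DifferentiableAt ℝ f (circleMap c p.1 p.2) :=
    fun p hp => hd _ (circleMap_mem_ball_diff hp)
  have hrect : Icc ((0 : ℝ), -π) (R, π) =ᵐ[volume] Ioo 0 R ×ˢ Ioo (-π) π := by
    rw [← Icc_prod_Icc]
    exact Measure.set_prod_ae_eq Ioo_ae_eq_Icc.symm Ioo_ae_eq_Icc.symm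
  have hdiv : (fun p : ℝ × ℝ => p.1 • (2 : ℂ) • dbar f (circleMap c p.1 p.2))
      =ᵐ[volume.restrict (Ioo 0 R ×ˢ Ioo (-π) π)]
        fun p => fderiv ℝ F p (1, 0) + fderiv ℝ G p (0, 1) := by
    filter_upwards [ae_restrict_mem (measurableSet_Ioo.prod measurableSet_Ioo),
      ae_restrict_of_ae (ht.ae_notMem volume)] with p hp hpt
    exact (fderiv_radial_add_fderiv_angular_eq_dbar (hdt p ⟨hp, hpt⟩)).symm
  have hgreen := integral_divergence_prod_Icc_of_hasFDerivAt_off_countable_of_le F G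
    (fderiv ℝ F) (fderiv ℝ G) (0, -π) (R, π) ⟨hR, by simp [Real.pi_nonneg]⟩ t ht
    ((continuous_circleMap_prod 0).continuousOn.smul (continuousOn_comp_circleMap hc))
    (differentiable_circleMap_one_mul_I.continuous.continuousOn.smul
      (continuousOn_comp_circleMap hc))
    (fun p hp => (differentiableAt_circleMap_smul_comp (hdt p hp)).hasFDerivAt)
    (fun p hp => (differentiableAt_circleMap_one_mul_I_smul_comp (hdt p hp)).hasFDerivAt)
    (((integrableOn_smul_comp_circleMap (hi.smul (2 : ℂ))).congr_fun_ae hdiv).congr_set_ae hrect)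
  rw [setIntegral_congr_set hrect, ← integral_congr_ae hdiv] at hgreen
  have hglue (r : ℝ) : G (r, π) = G (r, -π) := by
    have hπ (a : ℂ) (ρ : ℝ) : circleMap a ρ π = circleMap a ρ (-π) := by
      rw [← periodic_circleMap a ρ (-π), neg_add_eq_sub, two_mul, add_sub_cancel_right]
    simp only [G, hπ]
  simpa [hglue, F] using hgreen

theorem circleIntegral_eq_two_I_smul_setIntegral_dbar {f : ℂ → E} {c : ℂ} {R : ℝ} {s : Set ℂ}
    (hR : 0 ≤ R) (hs : s.Countable) (hc : ContinuousOn f (closedBall c R))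
    (hd : ∀ w ∈ ball c R \ s, DifferentiableAt ℝ f w) (hi : IntegrableOn (dbar f) (ball c R)) :
    (∮ w in C(c, R), f w) = (2 * I) • ∫ w in ball c R, dbar f w := by
  calc (∮ w in C(c, R), f w)
      = I • ∫ θ in (-π)..π, circleMap 0 R θ • f (circleMap c R θ) :=
        circleIntegral_eq_I_smul_intervalIntegral f c R
    _ = I • ∫ p in Ioo 0 R ×ˢ Ioo (-π) π, p.1 • (2 : ℂ) • dbar f (circleMap c p.1 p.2) := by
        rw [setIntegral_polar_dbar_eq_intervalIntegral hR hs hc hd hi]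
    _ = I • ∫ w in ball c R, (2 : ℂ) • dbar f w := by
        rw [setIntegral_ball_eq_setIntegral_circleMap (hi.fun_smul (2 : ℂ))]
    _ = (2 * I) • ∫ w in ball c R, dbar f w := by
        rw [integral_smul, smul_smul, mul_comm]

/-! ### Integrability of the Cauchy kernel -/

theorem integrableOn_sub_inv (z : ℂ) {K : Set ℂ} (hK : Bornology.IsBounded K) :
    IntegrableOn (fun w => (w - z)⁻¹) K := by
  obtain ⟨r, hKr⟩ := hK.subset_ball z
  have hzero : IntegrableOn (fun w : ℂ => ‖w‖⁻¹) (ball 0 r) := by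
    rw [integrableOn_fun_norm_addHaar volume (f := fun x : ℝ => x⁻¹)]
    refine (integrableOn_const (C := (1 : ℝ)) (by simp)).congr_fun (fun x hx => ?_)
      measurableSet_Ioo
    simp [hx.1.ne']
  have htranslate := (measurePreserving_sub_right volume z).restrict_preimage
    (measurableSet_ball (x := (0 : ℂ)) (ε := r))
  have hball := htranslate.integrable_comp_of_integrable hzero
  have hpre : (fun w => w - z) ⁻¹' ball 0 r = ball z r := by
    ext w
    simp [dist_eq_norm]
  rw [hpre] at hball
  refine IntegrableOn.mono_set (Integrable.mono hball (by fun_prop) ?_) hKr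
  exact ae_of_all _ fun w => by simp

theorem integrableOn_sub_inv_smul_dbar {f : ℂ → E} {U : Set ℂ} {c : ℂ} {R : ℝ} (hU : IsOpen U)
    (hsub : closedBall c R ⊆ U) (hf : ContDiffOn ℝ 1 f U) (z : ℂ) :
    IntegrableOn (fun w => (w - z)⁻¹ • dbar f w) (ball c R) :=
  (integrableOn_sub_inv z isBounded_ball).smul_continuousOn_of_subset
    ((continuousOn_dbar hf hU).mono hsub) measurableSet_ball (isCompact_closedBall c R)
    ball_subset_closedBall

/-! ### The regularized Cauchy kernel -/

/-- The smooth approximation `conj (w - z) / (|w - z| ^ 2 + t)`, `t > 0`, of the Cauchy kernel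
`1 / (w - z)`. -/
noncomputable def regularizedCauchyKernel (t : ℝ) (z w : ℂ) : ℂ :=
  conj (w - z) / ((‖w - z‖ ^ 2 + t : ℝ) : ℂ)

theorem regularizedCauchyKernel_denom_eq (t : ℝ) (z w : ℂ) :
    ((‖w - z‖ ^ 2 + t : ℝ) : ℂ) = (w - z) • conj (w - z) - (-t : ℂ) := by
  rw [smul_eq_mul, Complex.mul_conj']
  push_cast
  ring

theorem regularizedCauchyKernel_denom_ne_zero {t : ℝ} (ht : 0 < t) (z w : ℂ) :
    ((‖w - z‖ ^ 2 + t : ℝ) : ℂ) ≠ 0 :=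
  Complex.ofReal_ne_zero.2 (by positivity)

theorem differentiable_regularizedCauchyKernel_denom (t : ℝ) (z : ℂ) :
    Differentiable ℝ fun w => ((‖w - z‖ ^ 2 + t : ℝ) : ℂ) := by
  simp only [regularizedCauchyKernel_denom_eq]
  exact ((differentiable_id.sub_const z).fun_smul (differentiable_conj_sub z)).sub_const _

theorem differentiable_regularizedCauchyKernel {t : ℝ} (ht : 0 < t) (z : ℂ) :
    Differentiable ℝ (regularizedCauchyKernel t z) :=
  (differentiable_conj_sub z).fun_mul
    ((differentiable_regularizedCauchyKernel_denom t z).fun_inv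
      (regularizedCauchyKernel_denom_ne_zero ht z))

theorem dbar_regularizedCauchyKernel_denom (t : ℝ) (z w : ℂ) :
    dbar (fun v => ((‖v - z‖ ^ 2 + t : ℝ) : ℂ)) w = w - z := by
  simp only [regularizedCauchyKernel_denom_eq]
  rw [dbar_sub_const, dbar_smul (by fun_prop) (differentiable_conj_sub z w), dbar_conj_sub,
    dbar_eq_zero_of_differentiableAt (by fun_prop)]
  simp

theorem dbar_regularizedCauchyKernel {t : ℝ} (ht : 0 < t) (z w : ℂ) :
    dbar (regularizedCauchyKernel t z) w = ((t / (‖w - z‖ ^ 2 + t) ^ 2 : ℝ) : ℂ) := by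
  have hD := regularizedCauchyKernel_denom_ne_zero ht z
  have hprod : (fun v => ((‖v - z‖ ^ 2 + t : ℝ) : ℂ) • regularizedCauchyKernel t z v) =
      fun v => conj (v - z) := by
    funext v
    exact mul_div_cancel₀ _ (hD v)
  have hleibniz := dbar_smul (differentiable_regularizedCauchyKernel_denom t z w)
    (differentiable_regularizedCauchyKernel ht z w)
  rw [hprod, dbar_conj_sub, dbar_regularizedCauchyKernel_denom, regularizedCauchyKernel,
    smul_eq_mul, smul_eq_mul, mul_div_assoc', Complex.mul_conj'] at hleibniz
  have hDw := hD w
  push_cast at hleibniz hDw ⊢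
  field_simp at hleibniz ⊢
  linear_combination -hleibniz

theorem regularizedCauchyKernel_mul_sub (t : ℝ) (z w : ℂ) :
    regularizedCauchyKernel t z w * (w - z) = ((‖w - z‖ ^ 2 / (‖w - z‖ ^ 2 + t) : ℝ) : ℂ) := by
  rw [regularizedCauchyKernel, div_mul_eq_mul_div, Complex.conj_mul']
  push_cast
  rfl

-- At `w = z` both sides vanish, because `0⁻¹ = 0`.
theorem regularizedCauchyKernel_eq_mul_inv (t : ℝ) (z w : ℂ) :
    regularizedCauchyKernel t z w =
      ((‖w - z‖ ^ 2 / (‖w - z‖ ^ 2 + t) : ℝ) : ℂ) * (w - z)⁻¹ := by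
  rcases eq_or_ne w z with rfl | hwz
  · simp [regularizedCauchyKernel]
  · rw [← regularizedCauchyKernel_mul_sub, mul_inv_cancel_right₀ (sub_ne_zero.2 hwz)]

theorem norm_regularizedCauchyKernel_le {t : ℝ} (ht : 0 < t) (z w : ℂ) :
    ‖regularizedCauchyKernel t z w‖ ≤ ‖(w - z)⁻¹‖ := by
  rw [regularizedCauchyKernel_eq_mul_inv, norm_mul, Complex.norm_of_nonneg (by positivity)]
  exact mul_le_of_le_one_left (norm_nonneg _) (div_le_one_of_le₀ (by linarith) (by positivity))

theorem norm_dbar_regularizedCauchyKernel_le {t : ℝ} (ht : 0 < t) (z : ℂ) {w : ℂ} (hw : w ≠ z) :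
    ‖dbar (regularizedCauchyKernel t z) w‖ ≤ ‖(w - z)⁻¹‖ ^ 2 := by
  have hpos : 0 < ‖w - z‖ := norm_pos_iff.2 (sub_ne_zero.2 hw)
  rw [dbar_regularizedCauchyKernel ht, Complex.norm_of_nonneg (by positivity), norm_inv, inv_pow,
    ← one_div, div_le_div_iff₀ (by positivity) (by positivity)]
  nlinarith [sq_nonneg (‖w - z‖ ^ 2), mul_pos ht (sq_pos_of_pos hpos), sq_nonneg t]

theorem tendsto_regularizedCauchyKernel (z w : ℂ) :
    Tendsto (fun t => regularizedCauchyKernel t z w) (𝓝[>] 0) (𝓝 (w - z)⁻¹) := by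
  rcases eq_or_ne w z with rfl | hwz
  · simp [regularizedCauchyKernel]
  have hpos : 0 < ‖w - z‖ := norm_pos_iff.2 (sub_ne_zero.2 hwz)
  have hcont : ContinuousAt (fun t : ℝ => regularizedCauchyKernel t z w) 0 := by
    unfold regularizedCauchyKernel
    exact continuousAt_const.div (by fun_prop) (Complex.ofReal_ne_zero.2 (by positivity))
  have hzero : regularizedCauchyKernel 0 z w = (w - z)⁻¹ := by
    rw [Complex.inv_def, regularizedCauchyKernel, Complex.normSq_eq_norm_sq, add_zero,
      Complex.ofReal_inv, div_eq_mul_inv]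
  simpa only [hzero] using hcont.tendsto.mono_left nhdsWithin_le_nhds

theorem tendsto_dbar_regularizedCauchyKernel {z w : ℂ} (hw : w ≠ z) :
    Tendsto (fun t => dbar (regularizedCauchyKernel t z) w) (𝓝[>] 0) (𝓝 0) := by
  have hpos : 0 < ‖w - z‖ := norm_pos_iff.2 (sub_ne_zero.2 hw)
  have hcont : ContinuousAt (fun t : ℝ => ((t / (‖w - z‖ ^ 2 + t) ^ 2 : ℝ) : ℂ)) 0 :=
    Complex.continuous_ofReal.continuousAt.comp
      (continuousAt_id.div (by fun_prop) (by positivity))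
  have hzero : ((0 / (‖w - z‖ ^ 2 + 0) ^ 2 : ℝ) : ℂ) = 0 := by
    rw [zero_div, Complex.ofReal_zero]
  rw [← hzero]
  refine (hcont.tendsto.mono_left nhdsWithin_le_nhds).congr' ?_
  filter_upwards [self_mem_nhdsWithin] with t ht
  exact (dbar_regularizedCauchyKernel ht z w).symm

section Limits

variable {α : Type*} [MeasurableSpace α] {μ : Measure α} {φ : α → ℂ} {z : ℂ} {g : α → E}

theorem integrable_regularizedCauchyKernel_smul {t : ℝ} (ht : 0 < t) (hφ : AEMeasurable φ μ)
    (hg : Integrable (fun a => (φ a - z)⁻¹ • g a) μ) :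
    Integrable (fun a => regularizedCauchyKernel t z (φ a) • g a) μ := by
  have hmeas : AEStronglyMeasurable (fun a => ‖φ a - z‖ ^ 2 / (‖φ a - z‖ ^ 2 + t)) μ :=
    AEMeasurable.aestronglyMeasurable (by fun_prop)
  have hbound (a : α) : ‖‖φ a - z‖ ^ 2 / (‖φ a - z‖ ^ 2 + t)‖ ≤ 1 := by
    rw [Real.norm_of_nonneg (by positivity)]
    exact div_le_one_of_le₀ (by linarith) (by positivity)
  refine (hg.bdd_smul 1 hmeas (ae_of_all _ hbound)).congr (ae_of_all _ fun a => ?_)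
  simp only [Pi.smul_apply', regularizedCauchyKernel_eq_mul_inv, ← Complex.coe_smul, smul_smul]

theorem tendsto_integral_regularizedCauchyKernel_smul (hφ : AEMeasurable φ μ)
    (hg : Integrable (fun a => (φ a - z)⁻¹ • g a) μ) :
    Tendsto (fun t => ∫ a, regularizedCauchyKernel t z (φ a) • g a ∂μ) (𝓝[>] 0)
      (𝓝 (∫ a, (φ a - z)⁻¹ • g a ∂μ)) := by
  refine tendsto_integral_filter_of_dominated_convergence _ ?_ ?_ hg.norm
    (ae_of_all _ fun a => (tendsto_regularizedCauchyKernel z (φ a)).smul_const (g a))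
  · filter_upwards [self_mem_nhdsWithin] with t ht
    exact (integrable_regularizedCauchyKernel_smul ht hφ hg).aestronglyMeasurable
  · filter_upwards [self_mem_nhdsWithin] with t ht
    refine ae_of_all _ fun a => ?_
    rw [norm_smul, norm_smul]
    gcongr
    exact norm_regularizedCauchyKernel_le ht z (φ a)

end Limits

theorem continuous_dbar_regularizedCauchyKernel {t : ℝ} (ht : 0 < t) (z : ℂ) :
    Continuous (dbar (regularizedCauchyKernel t z)) := by
  rw [funext (dbar_regularizedCauchyKernel ht z)]
  exact Complex.continuous_ofReal.comp
    (continuous_const.div (by fun_prop) fun w => by positivity)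

theorem norm_dbar_regularizedCauchyKernel_smul_le {f : ℂ → E} {z w : ℂ} {t C : ℝ} (ht : 0 < t)
    (hf : ‖f w‖ ≤ C * ‖w - z‖) :
    ‖dbar (regularizedCauchyKernel t z) w • f w‖ ≤ C * ‖(w - z)⁻¹‖ := by
  rcases eq_or_ne w z with rfl | hwz
  · have hfz : f w = 0 := by simpa using hf
    simp [hfz]
  have hpos : 0 < ‖w - z‖ := norm_pos_iff.2 (sub_ne_zero.2 hwz)
  calc ‖dbar (regularizedCauchyKernel t z) w • f w‖
      ≤ ‖(w - z)⁻¹‖ ^ 2 * (C * ‖w - z‖) := by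
        rw [norm_smul]
        gcongr
        exact norm_dbar_regularizedCauchyKernel_le ht z hwz
    _ = C * ‖(w - z)⁻¹‖ := by
        rw [norm_inv]
        field_simp

theorem tendsto_integral_dbar_regularizedCauchyKernel_smul {f : ℂ → E} {z : ℂ} {C : ℝ}
    {μ : Measure ℂ} (hz : Integrable (fun w => (w - z)⁻¹) μ) (hf : AEStronglyMeasurable f μ)
    (hC : ∀ᵐ w ∂μ, ‖f w‖ ≤ C * ‖w - z‖) :
    Tendsto (fun t => ∫ w, dbar (regularizedCauchyKernel t z) w • f w ∂μ) (𝓝[>] 0) (𝓝 0) := by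
  rw [← integral_zero ℂ E (μ := μ)]
  refine tendsto_integral_filter_of_dominated_convergence _ ?_ ?_ (hz.norm.const_mul C) ?_
  · filter_upwards [self_mem_nhdsWithin] with t ht
    exact (continuous_dbar_regularizedCauchyKernel ht z).aestronglyMeasurable.smul hf
  · filter_upwards [self_mem_nhdsWithin] with t ht
    filter_upwards [hC] with w hw
    exact norm_dbar_regularizedCauchyKernel_smul_le ht hw
  · filter_upwards [hC] with w hw
    rcases eq_or_ne w z with rfl | hwz
    · have hfz : f w = 0 := by simpa using hw
      simp [hfz]
    · simpa using (tendsto_dbar_regularizedCauchyKernel hwz).smul_const (f w)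

/-! ### The Cauchy–Pompeiu formula -/

theorem exists_norm_sub_le_mul_of_differentiableAt {𝕜 V F : Type*} [NontriviallyNormedField 𝕜]
    [NormedAddCommGroup V] [NormedSpace 𝕜 V] [NormedAddCommGroup F] [NormedSpace 𝕜 F] {f : V → F}
    {K : Set V} {z : V} (hK : IsCompact K) (hf : ContinuousOn f K)
    (hz : DifferentiableAt 𝕜 f z) :
    ∃ C, ∀ w ∈ K, ‖f w - f z‖ ≤ C * ‖w - z‖ := by
  obtain ⟨A, hA⟩ := hz.isBigO_sub.bound
  obtain ⟨ε, hε, hnear⟩ := Metric.eventually_nhds_iff_ball.1 hA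
  obtain ⟨B, hB⟩ := hK.exists_bound_of_continuousOn (hf.sub continuousOn_const)
  refine ⟨max A (B / ε), fun w hw => ?_⟩
  by_cases hwε : w ∈ ball z ε
  · exact (hnear w hwε).trans (by gcongr; exact le_max_left _ _)
  · have hfar : ε ≤ ‖w - z‖ := by simpa [dist_eq_norm] using hwε
    have hB0 : 0 ≤ B := (norm_nonneg _).trans (hB w hw)
    calc ‖f w - f z‖ ≤ B := hB w hw
      _ = B / ε * ε := (div_mul_cancel₀ B hε.ne').symm
      _ ≤ max A (B / ε) * ‖w - z‖ := by
        gcongr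
        exact le_max_right _ _

theorem tendsto_circleIntegral_regularizedCauchyKernel_smul {f : ℂ → E} {c z : ℂ} {R : ℝ}
    (hf : CircleIntegrable (fun w => (w - z)⁻¹ • f w) c R) :
    Tendsto (fun t => ∮ w in C(c, R), regularizedCauchyKernel t z w • f w) (𝓝[>] 0)
      (𝓝 (∮ w in C(c, R), (w - z)⁻¹ • f w)) := by
  have hint := (intervalIntegrable_iff_integrableOn_Ioc_of_le Real.two_pi_pos.le).1 hf.out
  simp only [circleIntegral, intervalIntegral.integral_of_le Real.two_pi_pos.le,
    smul_comm (deriv (circleMap c R) _)] at hint ⊢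
  exact tendsto_integral_regularizedCauchyKernel_smul (continuous_circleMap c R).aemeasurable hint

theorem circleIntegrable_sub_inv_smul {f : ℂ → E} {c z : ℂ} {R : ℝ}
    (hf : ContinuousOn f (closedBall c R)) (hz : z ∈ ball c R) :
    CircleIntegrable (fun w => (w - z)⁻¹ • f w) c R := by
  have hR : 0 ≤ R := (pos_of_mem_ball hz).le
  refine ContinuousOn.circleIntegrable hR (ContinuousOn.smul (ContinuousOn.inv₀ (by fun_prop)
    fun w hw => sub_ne_zero.2 ?_) (hf.mono sphere_subset_closedBall))
  rintro rfl
  exact (mem_ball.1 hz).ne hw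

section CauchyPompeiu

variable {f : ℂ → E} {c z : ℂ} {R : ℝ} {s : Set ℂ}

theorem circleIntegral_regularizedCauchyKernel_smul {t : ℝ} (ht : 0 < t) (hR : 0 ≤ R)
    (hs : s.Countable) (hc : ContinuousOn f (closedBall c R))
    (hd : ∀ w ∈ ball c R \ s, DifferentiableAt ℝ f w)
    (hi : IntegrableOn (fun w => (w - z)⁻¹ • dbar f w) (ball c R)) :
    (∮ w in C(c, R), regularizedCauchyKernel t z w • f w) =
      (2 * I) • ((∫ w in ball c R, regularizedCauchyKernel t z w • dbar f w) +
        ∫ w in ball c R, dbar (regularizedCauchyKernel t z) w • f w) := by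
  have hk := differentiable_regularizedCauchyKernel ht z
  have hi₁ : IntegrableOn (fun w => regularizedCauchyKernel t z w • dbar f w) (ball c R) :=
    integrable_regularizedCauchyKernel_smul ht aemeasurable_id hi
  have hi₂ : IntegrableOn (fun w => dbar (regularizedCauchyKernel t z) w • f w) (ball c R) :=
    (((continuous_dbar_regularizedCauchyKernel ht z).continuousOn.smul hc).integrableOn_compact
      (isCompact_closedBall c R)).mono_set ball_subset_closedBall
  have hleibniz : (fun w => regularizedCauchyKernel t z w • dbar f w +
      dbar (regularizedCauchyKernel t z) w • f w) =ᵐ[volume.restrict (ball c R)]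
        dbar fun w => regularizedCauchyKernel t z w • f w := by
    filter_upwards [ae_restrict_mem measurableSet_ball,
      ae_restrict_of_ae (hs.ae_notMem volume)] with w hw hws
    exact (dbar_smul (hk w) (hd w ⟨hw, hws⟩)).symm
  rw [circleIntegral_eq_two_I_smul_setIntegral_dbar hR hs (hk.continuous.continuousOn.fun_smul hc)
    (fun w hw => (hk w).fun_smul (hd w hw)) ((hi₁.add hi₂).congr hleibniz), ← integral_add hi₁ hi₂,
    integral_congr_ae hleibniz]

theorem circleIntegral_sub_inv_smul_of_apply_eq_zero (hs : s.Countable) (hz : z ∈ ball c R \ s)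
    (hc : ContinuousOn f (closedBall c R)) (hd : ∀ w ∈ ball c R \ s, DifferentiableAt ℝ f w)
    (hi : IntegrableOn (fun w => (w - z)⁻¹ • dbar f w) (ball c R)) (hfz : f z = 0) :
    (∮ w in C(c, R), (w - z)⁻¹ • f w) = (2 * I) • ∫ w in ball c R, (w - z)⁻¹ • dbar f w := by
  obtain ⟨C, hC⟩ := exists_norm_sub_le_mul_of_differentiableAt (isCompact_closedBall c R) hc
    (hd z hz)
  simp only [hfz, sub_zero] at hC
  have hcircle := tendsto_circleIntegral_regularizedCauchyKernel_smul
    (circleIntegrable_sub_inv_smul hc hz.1)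
  have hdisc := tendsto_integral_regularizedCauchyKernel_smul aemeasurable_id hi
  have hremainder : Tendsto
      (fun t => ∫ w in ball c R, dbar (regularizedCauchyKernel t z) w • f w) (𝓝[>] 0) (𝓝 0) :=
    tendsto_integral_dbar_regularizedCauchyKernel_smul
      (integrableOn_sub_inv z isBounded_ball)
      ((hc.mono ball_subset_closedBall).aestronglyMeasurable measurableSet_ball)
      (ae_restrict_of_forall_mem measurableSet_ball fun w hw => hC w (ball_subset_closedBall hw))
  have hlimit := (hdisc.add hremainder).const_smul (2 * I)
  rw [add_zero] at hlimit
  refine tendsto_nhds_unique (hcircle.congr' ?_) hlimit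
  filter_upwards [self_mem_nhdsWithin] with t ht
  exact circleIntegral_regularizedCauchyKernel_smul ht (pos_of_mem_ball hz.1).le hs hc hd hi

theorem inhomogeneous_cauchy_integral_formula_general [CompleteSpace E] (hs : s.Countable)
    (hz : z ∈ ball c R \ s) (hc : ContinuousOn f (closedBall c R))
    (hd : ∀ w ∈ ball c R \ s, DifferentiableAt ℝ f w)
    (hi : IntegrableOn (fun w => (w - z)⁻¹ • dbar f w) (ball c R)) :
    f z = (2 * (π : ℂ) * I)⁻¹ • (∮ w in C(c, R), (w - z)⁻¹ • f w) -
      (π : ℂ)⁻¹ • ∫ w in ball c R, (w - z)⁻¹ • dbar f w := by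
  have hcentred : (∮ w in C(c, R), (w - z)⁻¹ • (f w - f z)) =
      (2 * I) • ∫ w in ball c R, (w - z)⁻¹ • dbar f w := by
    have h := circleIntegral_sub_inv_smul_of_apply_eq_zero (f := fun w => f w - f z) hs hz
      (hc.sub continuousOn_const) (fun w hw => (hd w hw).sub_const (f z))
    simp only [dbar_sub_const] at h
    exact h hi (sub_self _)
  have hconst : (∮ w in C(c, R), (w - z)⁻¹ • f z) = (2 * π * I) • f z := by
    rw [circleIntegral.integral_smul_const, circleIntegral.integral_sub_inv_of_mem_ball hz.1]
  have hsplit := circleIntegral.integral_sub (circleIntegrable_sub_inv_smul hc hz.1)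
    (circleIntegrable_sub_inv_smul (f := fun _ => f z) continuousOn_const hz.1)
  simp only [← smul_sub] at hsplit
  rw [hcentred, hconst] at hsplit
  have hfz : (2 * π * I) • f z = (∮ w in C(c, R), (w - z)⁻¹ • f w) -
      (2 * I) • ∫ w in ball c R, (w - z)⁻¹ • dbar f w := by
    rw [hsplit, sub_sub_cancel]
  calc f z = (2 * π * I)⁻¹ • (2 * π * I) • f z :=
        (inv_smul_smul₀ Complex.two_pi_I_ne_zero _).symm
    _ = _ := by
        rw [hfz, smul_sub, smul_smul]
        congr 2
        field_simp

end CauchyPompeiu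

/-- Inhomogeneous Cauchy integral formula (Cauchy–Pompeiu) on the unit disk: for `f`
continuously differentiable on a neighbourhood of `𝔻̄` and `|z| < 1`,
`f(z) = (1/2πi)∮_{|w|=1} f(w)/(w−z) dw − (1/π)∫_𝔻 (∂̄f)(w)/(w−z) dμ(w)`. -/
theorem inhomogeneous_cauchy_integral_formula
    (f : ℂ → ℂ) (U : Set ℂ) (hU : IsOpen U) (hsub : closedBall (0:ℂ) 1 ⊆ U)
    (hf : ContDiffOn ℝ 1 f U) :
    ∀ z ∈ ball (0:ℂ) 1,
      f z = (2 * (Real.pi : ℂ) * Complex.I)⁻¹ * (∮ w in C(0, 1), f w / (w - z)) -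
        (Real.pi : ℂ)⁻¹ * ∫ w in ball (0:ℂ) 1,
          ((1 / 2 : ℂ) * (fderiv ℝ f w 1 + Complex.I * fderiv ℝ f w Complex.I)) / (w - z) := by
  intro z hz
  have hd (w : ℂ) (hw : w ∈ ball 0 1 \ ∅) : DifferentiableAt ℝ f w :=
    (hf.differentiableOn one_ne_zero).differentiableAt
      (hU.mem_nhds (hsub (ball_subset_closedBall hw.1)))
  simpa only [dbar, smul_eq_mul, ← div_eq_inv_mul] using
    inhomogeneous_cauchy_integral_formula_general countable_empty ⟨hz, notMem_empty z⟩
      (hf.continuousOn.mono hsub) hd (integrableOn_sub_inv_smul_dbar hU hsub hf z)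
end
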